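/- For all μ > Ā and every x ≥ 0, the homogenized metric m̄_μ(·,x) is globally Lipschitz and is a viscosity solution of H̄_R(D m̄_μ(y,x)) = μ for y > 0, y ≠ x, with m̄_μ(x,x) = 0. Symmetrically, for every x ≤ 0, m̄_μ(·,x) is a viscosity solution of H̄_L(D m̄_μ(y,x)) = μ for y < 0, y ≠ x, with m̄_μ(x,x) = 0. -/

import Mathlib

open MeasureTheory ProbabilityTheory Set Filter Topology

noncomputable section

variable {Ω : Type*}

/-! ### Viscosity solutions of stationary Hamilton-Jacobi equations -/

/-- Viscosity subsolution of `G(Du, y) ≤ μ` on the set `U`. -/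
def IsViscSubsol (G : ℝ → ℝ → ℝ) (μ : ℝ) (U : Set ℝ) (u : ℝ → ℝ) : Prop :=
  ∀ φ : ℝ → ℝ, ContDiff ℝ 1 φ → ∀ y₀ ∈ U,
    IsLocalMaxOn (fun y => u y - φ y) U y₀ → G (deriv φ y₀) y₀ ≤ μ

/-- Viscosity supersolution of `G(Du, y) ≥ μ` on the set `U`. -/
def IsViscSupersol (G : ℝ → ℝ → ℝ) (μ : ℝ) (U : Set ℝ) (u : ℝ → ℝ) : Prop :=
  ∀ φ : ℝ → ℝ, ContDiff ℝ 1 φ → ∀ y₀ ∈ U,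
    IsLocalMinOn (fun y => u y - φ y) U y₀ → μ ≤ G (deriv φ y₀) y₀

/-- Viscosity solution of `G(Du, y) = μ` on the set `U`. -/
def IsViscSol (G : ℝ → ℝ → ℝ) (μ : ℝ) (U : Set ℝ) (u : ℝ → ℝ) : Prop :=
  IsViscSubsol G μ U u ∧ IsViscSupersol G μ U u

/-- Globally Lipschitz real function. -/
def IsLip (v : ℝ → ℝ) : Prop := ∃ K : NNReal, LipschitzWith K v

/-- Assumptions (H1)–(H6) on a random Hamiltonian `H = H(p, y, ω)`. -/
structure HamHyp [MeasurableSpace Ω] (H : ℝ → ℝ → Ω → ℝ) : Prop where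
  meas : Measurable fun q : ℝ × ℝ × Ω => H q.1 q.2.1 q.2.2
  lip_p : ∃ K : NNReal, ∀ (y : ℝ) (ω : Ω), LipschitzWith K fun p => H p y ω
  bounds : ∃ c₀ C₀ γ : ℝ, 0 < c₀ ∧ 0 < C₀ ∧ 0 < γ ∧
    ∀ (p y : ℝ) (ω : Ω), -c₀ * |p + γ| ≤ H p y ω ∧ H p y ω ≤ C₀ * |p + γ|
  coercive : ∀ M : ℝ, ∃ R : ℝ, ∀ (p y : ℝ) (ω : Ω), R ≤ |p| → M ≤ H p y ω
  modulus : ∃ w : ℝ → ℝ, Monotone w ∧ w 0 = 0 ∧ ContinuousAt w 0 ∧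
    ∀ (p x y : ℝ) (ω : Ω), |H p y ω - H p x ω| ≤ w (|x - y| * (1 + |p|))
  convex_p : ∀ (y : ℝ) (ω : Ω), ConvexOn ℝ Set.univ fun p => H p y ω
  min_at_zero : ∀ (p y : ℝ) (ω : Ω), H 0 y ω ≤ H p y ω

/-- The stochastic flux limiter `Ã(ω)`: the smallest `μ` such that the equation
`H(Dv, y, ω) ≤ μ` admits a globally Lipschitz viscosity subsolution on `ℝ`. -/
def fluxLimiter (H : ℝ → ℝ → Ω → ℝ) (ω : Ω) : ℝ :=
  sInf {μ : ℝ | ∃ v : ℝ → ℝ, IsLip v ∧ IsViscSubsol (fun p y => H p y ω) μ Set.univ v}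

/-- The maximal subsolution `m_μ(y, x, ω)` of the metric problem. -/
def metricSol (H : ℝ → ℝ → Ω → ℝ) (μ : ℝ) (ω : Ω) (y x : ℝ) : ℝ :=
  sSup {r : ℝ | ∃ v : ℝ → ℝ, IsLip v ∧
    IsViscSubsol (fun p y => H p y ω) μ Set.univ v ∧ r = v y - v x}

/-! ### Stochastic framework -/

/-- Stationarity (H8) of a Hamiltonian with respect to a translation group `τ`. -/
def Stationary (τ : ℝ → Ω → Ω) (H : ℝ → ℝ → Ω → ℝ) : Prop :=
  ∀ (p y z : ℝ) (ω : Ω), H p (y + z) ω = H p y (τ z ω)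

/-- An ergodic group of measure-preserving transformations of `(Ω, F, P)`. -/
structure ErgodicSetup [MeasurableSpace Ω] (P : Measure Ω) (τ : ℝ → Ω → Ω) : Prop where
  meas : ∀ z, Measurable (τ z)
  preserving : ∀ z, MeasurePreserving (τ z) P P
  add : ∀ x z : ℝ, τ (x + z) = τ x ∘ τ z
  ergodic : ∀ A : Set Ω, MeasurableSet A → (∀ z, τ z ⁻¹' A = A) → P A = 0 ∨ P A = 1

/-- σ-algebra generated by the maps `ω ↦ H(p, y, ω)`, `y ∈ U`, `p ∈ ℝ`. -/
def genSigma [MeasurableSpace Ω] (H : ℝ → ℝ → Ω → ℝ) (U : Set ℝ) : MeasurableSpace Ω :=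
  ⨆ y ∈ U, ⨆ p : ℝ, MeasurableSpace.comap (fun ω => H p y ω) inferInstance

/-- Unit range of dependence (H9). -/
def UnitRangeDep [MeasurableSpace Ω] (P : Measure Ω) (H : ℝ → ℝ → Ω → ℝ) : Prop :=
  ∀ U V : Set ℝ, MeasurableSet U → MeasurableSet V →
    (∀ x ∈ U, ∀ y ∈ V, 1 ≤ |x - y|) →
    ProbabilityTheory.Indep (genSigma H U) (genSigma H V) P

/-! ### The decompositions (H7-WFL) and (H7-ε) for a family `H ε` of Hamiltonians -/

/-- (H7-WFL). -/
def DecompWFL (HL HR : ℝ → ℝ → Ω → ℝ) (H : ℝ → ℝ → ℝ → Ω → ℝ) : Prop :=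
  ∃ φ : ℝ → ℝ, ContDiff ℝ (⊤ : ℕ∞) φ ∧ Antitone φ ∧
    (∀ y : ℝ, y ≤ -1 → φ y = 1) ∧ (∀ y : ℝ, 1 ≤ y → φ y = 0) ∧
    ∀ (ε p y : ℝ) (ω : Ω), H ε p y ω = φ y * HL p y ω + (1 - φ y) * HR p y ω

/-- (H7-ε). -/
def DecompEps (HL HR H0 : ℝ → ℝ → Ω → ℝ) (H : ℝ → ℝ → ℝ → Ω → ℝ) : Prop :=
  (∀ (p y : ℝ) (ω : Ω), HL p y ω ≤ H0 p y ω ∧ HR p y ω ≤ H0 p y ω) ∧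
  ∃ ψ : ℝ → ℝ → ℝ,
    (∀ ε : ℝ, 0 < ε → ContDiff ℝ (⊤ : ℕ∞) (ψ ε) ∧
      (∀ y : ℝ, 2 / Real.sqrt ε < y → ψ ε y = 1) ∧
      (∀ y : ℝ, y < 1 / Real.sqrt ε → ψ ε y = 0)) ∧
    ∀ ε : ℝ, 0 < ε → ∀ (p y : ℝ) (ω : Ω), H ε p y ω =
      ψ ε (-y) * HL p y ω + (1 - ψ ε (-y)) * (1 - ψ ε y) * H0 p y ω + ψ ε y * HR p y ω

/-! ### Effective Hamiltonians -/

/-- The effective Hamiltonian `H̄_α(p)` at a fixed `ω`: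
`inf` of the `μ` for which `H_α(p + Dv, y, ω) ≤ μ` has a Lipschitz, strictly sublinear
viscosity subsolution. -/
def effectiveHam (Hα : ℝ → ℝ → Ω → ℝ) (ω : Ω) (p : ℝ) : ℝ :=
  sInf {μ : ℝ | ∃ v : ℝ → ℝ, IsLip v ∧
    Tendsto (fun y => v y / |y|) (cocompact ℝ) (𝓝 0) ∧
    IsViscSubsol (fun q y => Hα q y ω) μ Set.univ fun y => p * y + v y}

/-- Non-decreasing part of a (convex coercive) Hamiltonian. -/
def Hplus (G : ℝ → ℝ) (p : ℝ) : ℝ := if 0 ≤ p then G p else sInf (Set.range G)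

/-- Non-increasing part of a (convex coercive) Hamiltonian. -/
def Hminus (G : ℝ → ℝ) (p : ℝ) : ℝ := if p ≤ 0 then G p else sInf (Set.range G)

/-! ### The approximated corrector equation -/

/-- Viscosity solution of `δ v + G(Dv, y) = 0` on `ℝ`. -/
def IsViscSolDelta (G : ℝ → ℝ → ℝ) (δ : ℝ) (v : ℝ → ℝ) : Prop :=
  (∀ φ : ℝ → ℝ, ContDiff ℝ 1 φ → ∀ y₀ : ℝ, IsLocalMax (fun y => v y - φ y) y₀ →
    δ * v y₀ + G (deriv φ y₀) y₀ ≤ 0) ∧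
  (∀ φ : ℝ → ℝ, ContDiff ℝ 1 φ → ∀ y₀ : ℝ, IsLocalMin (fun y => v y - φ y) y₀ →
    0 ≤ δ * v y₀ + G (deriv φ y₀) y₀)

/-! ### Evolutive Hamilton–Jacobi equations -/

/-- Viscosity subsolution of `u_t + G(Du, y) = 0` on `(0,T) × ℝ`. -/
def IsViscSubsolEvol (G : ℝ → ℝ → ℝ) (T : ℝ) (u : ℝ → ℝ → ℝ) : Prop :=
  ∀ φ : ℝ × ℝ → ℝ, ContDiff ℝ 1 φ → ∀ t₀ x₀ : ℝ, 0 < t₀ → t₀ < T →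
    IsLocalMaxOn (fun q : ℝ × ℝ => u q.1 q.2 - φ q) (Set.Ioo 0 T ×ˢ Set.univ) (t₀, x₀) →
    deriv (fun t => φ (t, x₀)) t₀ + G (deriv (fun x => φ (t₀, x)) x₀) x₀ ≤ 0

/-- Viscosity supersolution of `u_t + G(Du, y) = 0` on `(0,T) × ℝ`. -/
def IsViscSupersolEvol (G : ℝ → ℝ → ℝ) (T : ℝ) (u : ℝ → ℝ → ℝ) : Prop :=
  ∀ φ : ℝ × ℝ → ℝ, ContDiff ℝ 1 φ → ∀ t₀ x₀ : ℝ, 0 < t₀ → t₀ < T →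
    IsLocalMinOn (fun q : ℝ × ℝ => u q.1 q.2 - φ q) (Set.Ioo 0 T ×ˢ Set.univ) (t₀, x₀) →
    0 ≤ deriv (fun t => φ (t, x₀)) t₀ + G (deriv (fun x => φ (t₀, x)) x₀) x₀

/-! ### The junction problem -/

/-- Test functions for the junction problem: continuous, `C¹` on each side of the junction. -/
def IsPiecewiseC1 (φ : ℝ × ℝ → ℝ) : Prop :=
  Continuous φ ∧ ContDiffOn ℝ 1 φ {q : ℝ × ℝ | q.2 ≤ 0} ∧
    ContDiffOn ℝ 1 φ {q : ℝ × ℝ | 0 ≤ q.2}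

/-- Viscosity subsolution of the junction problem with flux limiter `A`. -/
def IsJunctionSubsol (HLb HRb : ℝ → ℝ) (A T : ℝ) (u : ℝ → ℝ → ℝ) : Prop :=
  ∀ φ : ℝ × ℝ → ℝ, IsPiecewiseC1 φ → ∀ t₀ x₀ : ℝ, 0 < t₀ → t₀ < T →
    IsLocalMaxOn (fun q : ℝ × ℝ => u q.1 q.2 - φ q) (Set.Ioo 0 T ×ˢ Set.univ) (t₀, x₀) →
    (x₀ < 0 → deriv (fun t => φ (t, x₀)) t₀ + HLb (deriv (fun x => φ (t₀, x)) x₀) ≤ 0) ∧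
    (0 < x₀ → deriv (fun t => φ (t, x₀)) t₀ + HRb (deriv (fun x => φ (t₀, x)) x₀) ≤ 0) ∧
    (x₀ = 0 → deriv (fun t => φ (t, 0)) t₀ +
      max A (max (Hplus HLb (derivWithin (fun x => φ (t₀, x)) (Set.Iic 0) 0))
        (Hminus HRb (derivWithin (fun x => φ (t₀, x)) (Set.Ici 0) 0))) ≤ 0)

/-- Viscosity supersolution of the junction problem with flux limiter `A`. -/
def IsJunctionSupersol (HLb HRb : ℝ → ℝ) (A T : ℝ) (u : ℝ → ℝ → ℝ) : Prop :=
  ∀ φ : ℝ × ℝ → ℝ, IsPiecewiseC1 φ → ∀ t₀ x₀ : ℝ, 0 < t₀ → t₀ < T →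
    IsLocalMinOn (fun q : ℝ × ℝ => u q.1 q.2 - φ q) (Set.Ioo 0 T ×ˢ Set.univ) (t₀, x₀) →
    (x₀ < 0 → 0 ≤ deriv (fun t => φ (t, x₀)) t₀ + HLb (deriv (fun x => φ (t₀, x)) x₀)) ∧
    (0 < x₀ → 0 ≤ deriv (fun t => φ (t, x₀)) t₀ + HRb (deriv (fun x => φ (t₀, x)) x₀)) ∧
    (x₀ = 0 → 0 ≤ deriv (fun t => φ (t, 0)) t₀ +
      max A (max (Hplus HLb (derivWithin (fun x => φ (t₀, x)) (Set.Iic 0) 0))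
        (Hminus HRb (derivWithin (fun x => φ (t₀, x)) (Set.Ici 0) 0))))

/-- Solution of the limit junction problem with initial datum `u₀`. -/
def IsJunctionSol (HLb HRb : ℝ → ℝ) (A T : ℝ) (u₀ : ℝ → ℝ) (u : ℝ → ℝ → ℝ) : Prop :=
  ContinuousOn (fun q : ℝ × ℝ => u q.1 q.2) (Set.Ico 0 T ×ˢ Set.univ) ∧
  (∀ y, u 0 y = u₀ y) ∧
  IsJunctionSubsol HLb HRb A T u ∧ IsJunctionSupersol HLb HRb A T u

/-! ### One-variable facts -/

structure HG (g : ℝ → ℝ) (μ R : ℝ) : Prop where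
  cont : Continuous g
  conv : ConvexOn ℝ Set.univ g
  min0 : ∀ p, g 0 ≤ g p
  R0 : 0 ≤ R
  coer : ∀ p, R ≤ |p| → μ < g p

/-- Upper end of the sublevel set. -/
def bf (g : ℝ → ℝ) (μ : ℝ) : ℝ := sSup {p | g p ≤ μ}

/-- Lower end of the sublevel set. -/
def af (g : ℝ → ℝ) (μ : ℝ) : ℝ := - bf (fun p => g (-p)) μ

lemma HG.neg {g : ℝ → ℝ} {μ R : ℝ} (h : HG g μ R) : HG (fun p => g (-p)) μ R where
  cont := h.cont.comp continuous_neg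
  conv := by
    refine ⟨convex_univ, fun x _ y _ a b ha hb hab => ?_⟩
    have := h.conv.2 (Set.mem_univ (-x)) (Set.mem_univ (-y)) ha hb hab
    simp only [smul_eq_mul] at *
    convert this using 2
    ring
  min0 := fun p => by simpa using h.min0 (-p)
  R0 := h.R0
  coer := fun p hp => h.coer (-p) (by simpa using hp)

lemma HG.abs_lt {g : ℝ → ℝ} {μ R : ℝ} (h : HG g μ R) {p : ℝ} (hp : g p ≤ μ) : |p| < R := by
  by_contra hlt
  exact absurd hp (not_le.2 (h.coer p (not_lt.1 hlt)))

lemma HG.bddAbove {g : ℝ → ℝ} {μ R : ℝ} (h : HG g μ R) : BddAbove {p | g p ≤ μ} :=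
  ⟨R, fun _ hp => (le_abs_self _).trans (h.abs_lt hp).le⟩

lemma HG.le_bf {g : ℝ → ℝ} {μ R : ℝ} (h : HG g μ R) {p : ℝ} (hp : g p ≤ μ) : p ≤ bf g μ :=
  le_csSup h.bddAbove hp

lemma HG.af_le {g : ℝ → ℝ} {μ R : ℝ} (h : HG g μ R) {p : ℝ} (hp : g p ≤ μ) : af g μ ≤ p := by
  have := h.neg.le_bf (p := -p) (by simpa using hp)
  unfold af; linarith

lemma HG.bf_nonneg {g : ℝ → ℝ} {μ R : ℝ} (h : HG g μ R) : 0 ≤ bf g μ := by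
  by_cases h0 : g 0 ≤ μ
  · exact h.le_bf h0
  · have : {p | g p ≤ μ} = ∅ := by
      ext p
      simp only [mem_ofPred_eq, mem_empty_iff_false, iff_false]
      intro hp
      exact h0 ((h.min0 p).trans hp)
    unfold bf
    rw [this, Real.sSup_empty]

lemma HG.bf_le {g : ℝ → ℝ} {μ R : ℝ} (h : HG g μ R) : bf g μ ≤ R :=
  Real.sSup_le (fun _ hp => (le_abs_self _).trans (h.abs_lt hp).le) h.R0

lemma HG.abs_bf_le {g : ℝ → ℝ} {μ R : ℝ} (h : HG g μ R) : |bf g μ| ≤ R := by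
  rw [abs_of_nonneg h.bf_nonneg]; exact h.bf_le

lemma HG.abs_af_le {g : ℝ → ℝ} {μ R : ℝ} (h : HG g μ R) : |af g μ| ≤ R := by
  unfold af; rw [abs_neg]; exact h.neg.abs_bf_le

lemma HG.bf_mem {g : ℝ → ℝ} {μ R : ℝ} (h : HG g μ R) (h0 : g 0 ≤ μ) : g (bf g μ) ≤ μ :=
  (isClosed_le h.cont continuous_const).csSup_mem (s := {p | g p ≤ μ}) ⟨0, h0⟩ h.bddAbove

lemma HG.af_mem {g : ℝ → ℝ} {μ R : ℝ} (h : HG g μ R) (h0 : g 0 ≤ μ) : g (af g μ) ≤ μ :=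
  h.neg.bf_mem (by simpa using h0)

lemma HG.conv_le {g : ℝ → ℝ} {μ R : ℝ} (h : HG g μ R) {b c : ℝ} (hc : 0 ≤ c) (hb : 0 < b)
    (hcb : c ≤ b) : g c ≤ (1 - c / b) * g 0 + c / b * g b := by
  have e1 : 0 ≤ 1 - c / b := by have := (div_le_one hb).2 hcb; linarith
  have e2 : 0 ≤ c / b := by positivity
  have := h.conv.2 (Set.mem_univ 0) (Set.mem_univ b) e1 e2 (by ring)
  simp only [smul_eq_mul, mul_zero, zero_add] at this
  rwa [div_mul_cancel₀ _ hb.ne'] at this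

lemma HG.le_bf_iff {g : ℝ → ℝ} {μ R : ℝ} (h : HG g μ R) {c : ℝ} (hc : 0 < c) :
    c ≤ bf g μ ↔ g c ≤ μ := by
  refine ⟨fun hcb => ?_, h.le_bf⟩
  have hb : 0 < bf g μ := hc.trans_le hcb
  have h0 : g 0 ≤ μ := by
    by_contra h0
    have : {p | g p ≤ μ} = ∅ := by
      ext p
      simp only [mem_ofPred_eq, mem_empty_iff_false, iff_false]
      intro hp
      exact h0 ((h.min0 p).trans hp)
    unfold bf at hb
    rw [this, Real.sSup_empty] at hb
    exact lt_irrefl _ hb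
  have h1 := h.conv_le hc.le hb hcb
  have h2 := h.bf_mem h0
  have h3 : c / bf g μ ≤ 1 := (div_le_one hb).2 hcb
  have h4 : 0 ≤ c / bf g μ := by positivity
  nlinarith

lemma HG.lt_of_lt_bf {g : ℝ → ℝ} {μ R : ℝ} (h : HG g μ R) (h0 : g 0 < μ) {c : ℝ} (hc : 0 < c)
    (hcb : c < bf g μ) : g c < μ := by
  have hb : 0 < bf g μ := hc.trans hcb
  have h1 := h.conv_le hc.le hb hcb.le
  have h2 := h.bf_mem h0.le
  have h3 : c / bf g μ < 1 := (div_lt_one hb).2 hcb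
  have h4 : 0 ≤ c / bf g μ := by positivity
  nlinarith

lemma HG.bf_pos {g : ℝ → ℝ} {μ R : ℝ} (h : HG g μ R) (h0 : g 0 < μ) : 0 < bf g μ := by
  have h1 : ∀ᶠ c in 𝓝 (0 : ℝ), g c < μ := h.cont.continuousAt.eventually_lt_const h0
  have h2 : ∀ᶠ c in 𝓝[>] (0 : ℝ), g c < μ := h1.filter_mono nhdsWithin_le_nhds
  obtain ⟨c, hc, hc0⟩ := (h2.and self_mem_nhdsWithin).exists
  exact lt_of_lt_of_le hc0 (h.le_bf hc.le)

lemma bf_continuous {G : ℝ → ℝ → ℝ} {μ R : ℝ} (h : ∀ y, HG (fun p => G p y) μ R)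
    (hc : ∀ p, Continuous fun y => G p y) (h0 : ∀ y, G 0 y < μ) :
    Continuous fun y => bf (fun p => G p y) μ := by
  rw [continuous_iff_continuousAt]
  intro y₀
  refine tendsto_order.2 ⟨fun c hcb => ?_, fun c hcb => ?_⟩
  · have hb := (h y₀).bf_pos (h0 y₀)
    obtain ⟨d, hd1, hd2⟩ := exists_between (max_lt hcb hb)
    have hd0 : 0 < d := (le_max_right _ _).trans_lt hd1
    have hlt := (h y₀).lt_of_lt_bf (h0 y₀) hd0 hd2
    filter_upwards [(hc d).continuousAt.eventually_lt_const hlt] with y hy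
    exact ((le_max_left _ _).trans_lt hd1).trans_le ((h y).le_bf hy.le)
  · have hc0 : 0 < c := (h y₀).bf_nonneg.trans_lt hcb
    have hlt : μ < G c y₀ := by
      by_contra hh
      exact absurd ((h y₀).le_bf (not_lt.1 hh)) (not_le.2 hcb)
    filter_upwards [(hc c).continuousAt.eventually_const_lt hlt] with y hy
    by_contra hh
    exact absurd (((h y).le_bf_iff hc0).1 (not_lt.1 hh)) (not_le.2 hy)

lemma af_continuous {G : ℝ → ℝ → ℝ} {μ R : ℝ} (h : ∀ y, HG (fun p => G p y) μ R)
    (hc : ∀ p, Continuous fun y => G p y) (h0 : ∀ y, G 0 y < μ) :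
    Continuous fun y => af (fun p => G p y) μ :=
  (bf_continuous (G := fun p y => G (-p) y) (fun y => (h y).neg) (fun p => hc (-p))
    (by simpa using h0)).neg

/-! ### Comparison for viscosity subsolutions -/

lemma isLocalMax_comp_neg {f : ℝ → ℝ} {y : ℝ} (h : IsLocalMax f (-y)) :
    IsLocalMax (fun s => f (-s)) y := by
  have : Tendsto (fun s : ℝ => -s) (𝓝 y) (𝓝 (-y)) := continuous_neg.tendsto y
  exact this.eventually h

lemma IsViscSubsol.refl {G : ℝ → ℝ → ℝ} {μ : ℝ} {v : ℝ → ℝ} (hv : IsViscSubsol G μ univ v) :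
    IsViscSubsol (fun p y => G (-p) (-y)) μ univ (fun y => v (-y)) := by
  intro φ hφ y₀ _ hmax
  rw [isLocalMaxOn_univ_iff] at hmax
  have h1 : IsLocalMax (fun y => v y - φ (-y)) (-y₀) := by
    have := isLocalMax_comp_neg (f := fun y => v (-y) - φ y) (y := -y₀) (by simpa using hmax)
    simpa using this
  have h2 := hv (fun y => φ (-y)) (hφ.comp contDiff_neg) (-y₀) trivial
    (by rw [isLocalMaxOn_univ_iff]; exact h1)
  rw [deriv_comp_neg] at h2
  simpa using h2

lemma integral_contDiff {g : ℝ → ℝ} (hg : Continuous g) : ContDiff ℝ 1 (fun s => ∫ u in (0:ℝ)..s, g u) := by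
  have hd : ∀ s, HasDerivAt (fun s => ∫ u in (0:ℝ)..s, g u) (g s) s := fun s =>
    hg.integral_hasStrictDerivAt 0 s |>.hasDerivAt
  rw [contDiff_one_iff_deriv]
  refine ⟨fun s => (hd s).differentiableAt, ?_⟩
  rwa [funext fun s => (hd s).deriv]

lemma visc_upper {G : ℝ → ℝ → ℝ} {μ : ℝ} {v g : ℝ → ℝ} (hv : IsViscSubsol G μ univ v)
    (hvc : Continuous v) (hg : Continuous g) (hG : ∀ p y, G p y ≤ μ → p ≤ g y) {x y : ℝ}
    (hxy : x ≤ y) : v y - v x ≤ ∫ s in x..y, g s := by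
  by_contra hcon
  push Not at hcon
  set F : ℝ → ℝ := fun s => ∫ u in (0:ℝ)..s, g u with hF
  have hFd : ∀ s, HasDerivAt F (g s) s := fun s =>
    (hg.integral_hasStrictDerivAt 0 s).hasDerivAt
  have hFc : ContDiff ℝ 1 F := integral_contDiff hg
  have hFxy : ∫ s in x..y, g s = F y - F x := by
    rw [hF]; exact (intervalIntegral.integral_interval_sub_left (hg.intervalIntegrable _ _) (hg.intervalIntegrable _ _)).symm
  rw [hFxy] at hcon
  have hlt : x < y := by
    rcases hxy.lt_or_eq with h | h
    · exact h
    · subst h; simp at hcon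
  obtain ⟨η, hη0, hη⟩ : ∃ η, 0 < η ∧ η < (v y - v x) - (F y - F x) := by
    obtain ⟨η, h1, h2⟩ := exists_between (sub_pos.2 hcon)
    exact ⟨η, h1, h2⟩
  set D := |(v (y+1) - F (y+1)) - (v y - F y)|
  set k : ℝ := D / η + 1
  have hk : 0 < k := by positivity
  have hek : D + η < η * Real.exp k := by
    have h1 := Real.add_one_le_exp k
    have h2 : η * (k + 1) ≤ η * Real.exp k := mul_le_mul_of_nonneg_left h1 hη0.le
    have h3 : η * (k + 1) = D + 2 * η := by simp only [k]; field_simp; ring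
    linarith
  set φ : ℝ → ℝ := fun s => F s + η * Real.exp (k * (s - y)) with hφ
  have hφc : ContDiff ℝ 1 φ := hFc.add (by fun_prop)
  have hφd : ∀ s, HasDerivAt φ (g s + η * (Real.exp (k * (s - y)) * (k * 1))) s := fun s =>
    (hFd s).add ((((((hasDerivAt_id s).sub_const y).const_mul k)).exp).const_mul η)
  obtain ⟨s, -, hs⟩ := IsCompact.exists_isLocalMax_mem_open (f := fun s => v s - φ s)
    (isCompact_Icc (a := x) (b := y + 1)) Ioo_subset_Icc_self
    (hvc.sub hφc.continuous).continuousOn (z := y) ⟨hlt.le, by linarith⟩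
    (by
      rintro z ⟨hz, hz'⟩
      rcases hz.1.eq_or_lt with h | h
      · subst h
        have := Real.exp_pos (k * (x - y))
        have : 0 < η * Real.exp (k * (x - y)) := by positivity
        simp only [hφ, sub_self, mul_zero, Real.exp_zero]
        linarith
      · have : z = y + 1 := by
          by_contra hne
          exact hz' ⟨h, lt_of_le_of_ne hz.2 hne⟩
        subst this
        have h1 : (v (y+1) - F (y+1)) - (v y - F y) ≤ D := le_abs_self _
        simp only [hφ, sub_self, mul_zero, Real.exp_zero, add_sub_cancel_left, mul_one]
        linarith) isOpen_Ioo
  have h1 := hG _ _ (hv φ hφc s trivial (by rw [isLocalMaxOn_univ_iff]; exact hs))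
  rw [(hφd s).deriv] at h1
  have : 0 < η * (Real.exp (k * (s - y)) * (k * 1)) := by
    have := Real.exp_pos (k * (s - y)); positivity
  linarith

lemma visc_lower {G : ℝ → ℝ → ℝ} {μ : ℝ} {v g : ℝ → ℝ} (hv : IsViscSubsol G μ univ v)
    (hvc : Continuous v) (hg : Continuous g) (hG : ∀ p y, G p y ≤ μ → g y ≤ p) {x y : ℝ}
    (hxy : x ≤ y) : ∫ s in x..y, g s ≤ v y - v x := by
  have := visc_upper hv.refl (hvc.comp continuous_neg) (g := fun s => - g (-s))
    (hg.comp continuous_neg).neg (fun p y h => by have := hG _ _ h; linarith)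
    (neg_le_neg hxy)
  rw [intervalIntegral.integral_neg, intervalIntegral.integral_comp_neg] at this
  simp only [neg_neg] at this
  linarith

lemma visc_zero {G : ℝ → ℝ → ℝ} {μ : ℝ} {v : ℝ → ℝ} (hv : IsViscSubsol G μ univ v)
    (hvc : Continuous v) (hc : Continuous fun y => G 0 y) (hmin : ∀ p y, G 0 y ≤ G p y) (y : ℝ) :
    G 0 y ≤ μ := by
  by_contra hcon
  push Not at hcon
  have := (hc.continuousAt (x := y)).eventually_const_lt hcon
  obtain ⟨r, hr, hball⟩ := Metric.eventually_nhds_iff.1 this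
  set N : ℝ := (|v (y + r) - v y| + |v (y - r) - v y| + 1) / r ^ 2
  have hN : N * r ^ 2 = |v (y + r) - v y| + |v (y - r) - v y| + 1 := by
    simp only [N]; field_simp
  have hφc : ContDiff ℝ 1 (fun s : ℝ => N * (s - y) ^ 2) := by fun_prop
  obtain ⟨s, hs1, hs⟩ := IsCompact.exists_isLocalMax_mem_open
    (f := fun s => v s - N * (s - y) ^ 2)
    (isCompact_Icc (a := y - r) (b := y + r)) Ioo_subset_Icc_self
    (hvc.sub hφc.continuous).continuousOn (z := y) ⟨by linarith, by linarith⟩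
    (by
      rintro z ⟨hz, hz'⟩
      have a1 := le_abs_self (v (y + r) - v y)
      have a2 := le_abs_self (v (y - r) - v y)
      have a3 := abs_nonneg (v (y + r) - v y)
      have a4 := abs_nonneg (v (y - r) - v y)
      rcases hz.1.eq_or_lt with h | h
      · subst h
        have : N * (y - r - y) ^ 2 = N * r ^ 2 := by ring
        simp only [this, sub_self, hN]
        norm_num; linarith
      · have : z = y + r := by
          by_contra hne
          exact hz' ⟨h, lt_of_le_of_ne hz.2 hne⟩
        subst this
        have : N * (y + r - y) ^ 2 = N * r ^ 2 := by ring
        simp only [this, sub_self, hN]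
        norm_num; linarith) isOpen_Ioo
  have h1 := hv _ hφc s trivial (by rw [isLocalMaxOn_univ_iff]; exact hs)
  have h2 : μ < G 0 s := hball (by
    rw [Real.dist_eq, abs_lt]; exact ⟨by linarith [hs1.1], by linarith [hs1.2]⟩)
  exact absurd ((hmin _ s).trans h1) (not_le.2 h2)

lemma subsol_integral {G : ℝ → ℝ → ℝ} {μ : ℝ} {g : ℝ → ℝ} (hg : Continuous g)
    (hG : ∀ y, G (g y) y ≤ μ) : IsViscSubsol G μ univ (fun y => ∫ s in (0:ℝ)..y, g s) := by
  intro φ hφ y₀ _ hmax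
  rw [isLocalMaxOn_univ_iff] at hmax
  have h1 : HasDerivAt (fun y => (∫ s in (0:ℝ)..y, g s) - φ y) (g y₀ - deriv φ y₀) y₀ :=
    ((hg.integral_hasStrictDerivAt 0 y₀).hasDerivAt).sub
      ((hφ.differentiable (by simp)) y₀).hasDerivAt
  have h2 := hmax.hasDerivAt_eq_zero h1
  rw [← sub_eq_zero.1 h2]
  exact hG y₀

lemma abs_integral_le {g : ℝ → ℝ} {R : ℝ} (hR : ∀ y, |g y| ≤ R) (x y : ℝ) :
    |∫ s in x..y, g s| ≤ R * |y - x| := by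
  rw [← Real.norm_eq_abs]
  exact intervalIntegral.norm_integral_le_of_norm_le_const (fun s _ => hR s)

lemma lip_integral {g : ℝ → ℝ} (hg : Continuous g) {R : ℝ} (hR : ∀ y, |g y| ≤ R) (x y : ℝ) :
    |(∫ s in (0:ℝ)..y, g s) - ∫ s in (0:ℝ)..x, g s| ≤ R * |y - x| := by
  rw [intervalIntegral.integral_interval_sub_left (hg.intervalIntegrable _ _)
    (hg.intervalIntegrable _ _)]
  exact abs_integral_le hR x y

lemma isLip_integral {g : ℝ → ℝ} (hg : Continuous g) {R : ℝ} (hR : ∀ y, |g y| ≤ R) :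
    IsLip (fun y => ∫ s in (0:ℝ)..y, g s) :=
  ⟨R.toNNReal, LipschitzWith.of_dist_le' fun x y => by
    rw [Real.dist_eq, Real.dist_eq]; exact lip_integral hg hR y x⟩

lemma IsLip.continuous {v : ℝ → ℝ} (h : IsLip v) : Continuous v := by
  obtain ⟨K, hK⟩ := h; exact hK.continuous

/-! ### Random Hamiltonians -/

structure GoodH (G : ℝ → ℝ → Ω → ℝ) (μ R : ℝ) : Prop where
  hg : ∀ y ω, HG (fun p => G p y ω) μ R
  cy : ∀ p ω, Continuous fun y => G p y ω
  lip : ∃ K : ℝ, 0 ≤ K ∧ ∀ p q y ω, G q y ω ≤ G p y ω + K * |q - p|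
  bdd : ∃ C, ∀ y ω, G 0 y ω ≤ C

lemma HamHyp.good [MeasurableSpace Ω] {H : ℝ → ℝ → Ω → ℝ} (h : HamHyp H) (μ : ℝ) :
    ∃ R, GoodH H μ R := by
  obtain ⟨K, hK⟩ := h.lip_p
  obtain ⟨R, hR⟩ := h.coercive (μ + 1)
  obtain ⟨c₀, C₀, γ, -, -, -, hb⟩ := h.bounds
  obtain ⟨w, -, hw0, hwc, hw⟩ := h.modulus
  refine ⟨max R 0, fun y ω => ⟨(hK y ω).continuous, h.convex_p y ω, fun p => h.min_at_zero p y ω,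
    le_max_right _ _, fun p hp => ?_⟩, fun p ω => ?_, ⟨K, K.2, fun p q y ω => ?_⟩,
    ⟨C₀ * |0 + γ|, fun y ω => (hb 0 y ω).2⟩⟩
  · have := hR p y ω ((le_max_left _ _).trans hp)
    linarith
  · rw [continuous_iff_continuousAt]
    intro x
    rw [ContinuousAt, tendsto_iff_dist_tendsto_zero]
    have h1 : Tendsto (fun y => |x - y| * (1 + |p|)) (𝓝 x) (𝓝 0) := by
      have : Continuous (fun y => |x - y| * (1 + |p|)) := by fun_prop
      simpa using this.tendsto x
    have h2 : Tendsto (fun y => w (|x - y| * (1 + |p|))) (𝓝 x) (𝓝 0) := by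
      have := hwc.tendsto.comp h1
      rwa [hw0] at this
    exact squeeze_zero (fun _ => dist_nonneg) (fun y => by rw [Real.dist_eq]; exact hw p x y ω) h2
  · have := (hK y ω).dist_le_mul q p
    rw [Real.dist_eq, Real.dist_eq] at this
    have := le_abs_self (H q y ω - H p y ω)
    linarith

lemma GoodH.negp {G : ℝ → ℝ → Ω → ℝ} {μ R : ℝ} (h : GoodH G μ R) :
    GoodH (fun p y ω => G (-p) y ω) μ R where
  hg := fun y ω => (h.hg y ω).neg
  cy := fun p ω => h.cy (-p) ω
  lip := by
    obtain ⟨K, hK0, hK⟩ := h.lip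
    refine ⟨K, hK0, fun p q y ω => ?_⟩
    have := hK (-p) (-q) y ω
    rwa [show -q - -p = -(q - p) by ring, abs_neg] at this
  bdd := by simpa using h.bdd

lemma GoodH.negy {G : ℝ → ℝ → Ω → ℝ} {μ R : ℝ} (h : GoodH G μ R) :
    GoodH (fun p y ω => G p (-y) ω) μ R where
  hg := fun y ω => h.hg (-y) ω
  cy := fun p ω => (h.cy p ω).comp continuous_neg
  lip := by
    obtain ⟨K, hK0, hK⟩ := h.lip
    exact ⟨K, hK0, fun p q y ω => hK p q (-y) ω⟩
  bdd := by
    obtain ⟨C, hC⟩ := h.bdd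
    exact ⟨C, fun y ω => hC (-y) ω⟩

lemma GoodH.flux {G : ℝ → ℝ → Ω → ℝ} {μ R A : ℝ} (h : GoodH G μ R) {ω : Ω}
    (hA : fluxLimiter G ω = A) (y : ℝ) : G 0 y ω ≤ A := by
  refine le_of_forall_pos_le_add fun ε hε => ?_
  have hne : {μ : ℝ | ∃ v : ℝ → ℝ, IsLip v ∧
      IsViscSubsol (fun p y => G p y ω) μ Set.univ v}.Nonempty := by
    obtain ⟨C, hC⟩ := h.bdd
    exact ⟨C, _, isLip_integral (g := fun _ => 0) continuous_const (R := 0) (by simp),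
      subsol_integral (G := fun p y => G p y ω) continuous_const (fun y => hC y ω)⟩
  have hlt : fluxLimiter G ω < A + ε := by linarith
  obtain ⟨μ', ⟨v, hv, hs⟩, hμ'⟩ := exists_lt_of_csInf_lt hne hlt
  have := visc_zero hs hv.continuous (h.cy 0 ω) (fun p y => (h.hg y ω).min0 p) y
  linarith

lemma GoodH.cont_b {G : ℝ → ℝ → Ω → ℝ} {μ R : ℝ} (h : GoodH G μ R) {ω : Ω}
    (h0 : ∀ y, G 0 y ω < μ) : Continuous fun y => bf (fun p => G p y ω) μ :=
  bf_continuous (G := fun p y => G p y ω) (fun y => h.hg y ω) (fun p => h.cy p ω) h0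

lemma GoodH.cont_a {G : ℝ → ℝ → Ω → ℝ} {μ R : ℝ} (h : GoodH G μ R) {ω : Ω}
    (h0 : ∀ y, G 0 y ω < μ) : Continuous fun y => af (fun p => G p y ω) μ :=
  af_continuous (G := fun p y => G p y ω) (fun y => h.hg y ω) (fun p => h.cy p ω) h0

lemma GoodH.metric_up {G : ℝ → ℝ → Ω → ℝ} {μ R : ℝ} (h : GoodH G μ R) {ω : Ω}
    (h0 : ∀ y, G 0 y ω < μ) {x y : ℝ} (hxy : x ≤ y) :
    metricSol G μ ω y x = ∫ s in x..y, bf (fun p => G p s ω) μ := by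
  have hc := h.cont_b h0
  refine IsGreatest.csSup_eq ⟨⟨_, isLip_integral hc (fun y => (h.hg y ω).abs_bf_le),
    subsol_integral hc (fun y => (h.hg y ω).bf_mem (h0 y).le), ?_⟩, ?_⟩
  · exact (intervalIntegral.integral_interval_sub_left (hc.intervalIntegrable _ _)
      (hc.intervalIntegrable _ _)).symm
  · rintro r ⟨v, hv, hs, rfl⟩
    exact visc_upper hs hv.continuous hc (fun p y hp => (h.hg y ω).le_bf hp) hxy

lemma GoodH.metric_down {G : ℝ → ℝ → Ω → ℝ} {μ R : ℝ} (h : GoodH G μ R) {ω : Ω}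
    (h0 : ∀ y, G 0 y ω < μ) {x y : ℝ} (hxy : y ≤ x) :
    metricSol G μ ω y x = ∫ s in x..y, af (fun p => G p s ω) μ := by
  have hc := h.cont_a h0
  refine IsGreatest.csSup_eq ⟨⟨_, isLip_integral hc (fun y => (h.hg y ω).abs_af_le),
    subsol_integral hc (fun y => (h.hg y ω).af_mem (h0 y).le), ?_⟩, ?_⟩
  · exact (intervalIntegral.integral_interval_sub_left (hc.intervalIntegrable _ _)
      (hc.intervalIntegrable _ _)).symm
  · rintro r ⟨v, hv, hs, rfl⟩
    have := visc_lower hs hv.continuous hc (fun p y hp => (h.hg y ω).af_le hp) hxy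
    rw [intervalIntegral.integral_symm]
    linarith

lemma GoodH.metric_lip {G : ℝ → ℝ → Ω → ℝ} {μ R : ℝ} (h : GoodH G μ R) {ω : Ω}
    (h0 : ∀ y, G 0 y ω < μ) (x y z : ℝ) :
    |metricSol G μ ω y x - metricSol G μ ω z x| ≤ R * |y - z| := by
  have hb := h.cont_b h0
  have ha := h.cont_a h0
  have hbR : ∀ y, |bf (fun p => G p y ω) μ| ≤ R := fun y => (h.hg y ω).abs_bf_le
  have haR : ∀ y, |af (fun p => G p y ω) μ| ≤ R := fun y => (h.hg y ω).abs_af_le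
  have mixed : ∀ y z, z ≤ x → x ≤ y →
      |metricSol G μ ω y x - metricSol G μ ω z x| ≤ R * |y - z| := by
    intro y z hz hy
    rw [h.metric_up h0 hy, h.metric_down h0 hz]
    have h1 := abs_integral_le hbR x y
    have h2 := abs_integral_le haR x z
    have h3 := abs_sub (∫ s in x..y, bf (fun p => G p s ω) μ) (∫ s in x..z, af (fun p => G p s ω) μ)
    rw [abs_of_nonneg (by linarith : 0 ≤ y - x)] at h1
    rw [abs_of_nonpos (by linarith : z - x ≤ 0)] at h2
    rw [abs_of_nonneg (by linarith : 0 ≤ y - z)]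
    nlinarith
  rcases le_total x y with hy | hy <;> rcases le_total x z with hz | hz
  · rw [h.metric_up h0 hy, h.metric_up h0 hz, intervalIntegral.integral_interval_sub_left
      (hb.intervalIntegrable _ _) (hb.intervalIntegrable _ _)]
    exact abs_integral_le hbR z y
  · exact mixed y z hz hy
  · rw [abs_sub_comm, abs_sub_comm y z]; exact mixed z y hy hz
  · rw [h.metric_down h0 hy, h.metric_down h0 hz, intervalIntegral.integral_interval_sub_left
      (ha.intervalIntegrable _ _) (ha.intervalIntegrable _ _)]
    exact abs_integral_le haR z y

/-- The set whose infimum is the effective Hamiltonian. -/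
def effSet (G : ℝ → ℝ → Ω → ℝ) (ω : Ω) (p : ℝ) : Set ℝ :=
  {μ : ℝ | ∃ v : ℝ → ℝ, IsLip v ∧
    Tendsto (fun y => v y / |y|) (cocompact ℝ) (𝓝 0) ∧
    IsViscSubsol (fun q y => G q y ω) μ Set.univ fun y => p * y + v y}

lemma eff_mem {G : ℝ → ℝ → Ω → ℝ} {μ R B : ℝ} {ω : Ω} {g : ℝ → ℝ} (hg : Continuous g)
    (hR : ∀ y, |g y| ≤ R) (hG : ∀ y, G (g y) y ω ≤ μ)
    (h1 : Tendsto (fun t => (∫ s in (0:ℝ)..t, g s) / t) atTop (𝓝 B))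
    (h2 : Tendsto (fun t => (∫ s in (0:ℝ)..t, g s) / t) atBot (𝓝 B)) : μ ∈ effSet G ω B := by
  refine ⟨fun y => (∫ s in (0:ℝ)..y, g s) - B * y, ?_, ?_, ?_⟩
  · refine ⟨(R + |B|).toNNReal, LipschitzWith.of_dist_le' fun x y => ?_⟩
    rw [Real.dist_eq, Real.dist_eq]
    have e1 := lip_integral hg hR y x
    have e2 : |B * x - B * y| = |B| * |x - y| := by rw [← mul_sub, abs_mul]
    have e3 := abs_sub ((∫ s in (0:ℝ)..x, g s) - ∫ s in (0:ℝ)..y, g s) (B * x - B * y)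
    calc _ = |((∫ s in (0:ℝ)..x, g s) - ∫ s in (0:ℝ)..y, g s) - (B * x - B * y)| := by
            congr 1; ring
      _ ≤ _ := by rw [add_mul]; linarith
  · rw [cocompact_eq_atBot_atTop, tendsto_sup]
    constructor
    · have h3 : Tendsto (fun t => -((∫ s in (0:ℝ)..t, g s) / t - B)) atBot (𝓝 0) := by
        simpa using (h2.sub_const B).neg
      refine h3.congr' ?_
      filter_upwards [eventually_lt_atBot 0] with t ht
      rw [abs_of_neg ht]
      field_simp [ht.ne]
    · have h3 : Tendsto (fun t => ((∫ s in (0:ℝ)..t, g s) / t - B)) atTop (𝓝 0) := by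
        simpa using (h1.sub_const B)
      refine h3.congr' ?_
      filter_upwards [eventually_gt_atTop 0] with t ht
      rw [abs_of_pos ht]
      field_simp [ht.ne']
  · have : (fun y => B * y + ((∫ s in (0:ℝ)..y, g s) - B * y)) = fun y => ∫ s in (0:ℝ)..y, g s := by
      funext y; ring
    rw [this]
    exact subsol_integral (G := fun q y => G q y ω) hg hG

lemma slope_aux {v : ℝ → ℝ} (B : ℝ) (hv : Tendsto (fun y => v y / |y|) (cocompact ℝ) (𝓝 0)) :
    Tendsto (fun t => ((B * t + v t) - (B * 0 + v 0)) / t) atTop (𝓝 B) := by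
  rw [cocompact_eq_atBot_atTop, tendsto_sup] at hv
  have h1 : Tendsto (fun t => B + v t / |t| - v 0 / t) atTop (𝓝 (B + 0 - 0)) :=
    (hv.2.const_add B).sub (tendsto_const_nhds.div_atTop tendsto_id)
  rw [add_zero, sub_zero] at h1
  refine h1.congr' ?_
  filter_upwards [eventually_gt_atTop 0] with t ht
  rw [abs_of_pos ht]
  field_simp
  ring

lemma GoodH.eff_lb_b {G : ℝ → ℝ → Ω → ℝ} {μ R B μ' : ℝ} (h : GoodH G μ R) {ω : Ω}
    (h0 : ∀ y, G 0 y ω < μ)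
    (h1 : Tendsto (fun t => (∫ s in (0:ℝ)..t, bf (fun p => G p s ω) μ) / t) atTop (𝓝 B))
    (hμ' : μ' ∈ effSet G ω B) : μ ≤ μ' := by
  obtain ⟨v, hv, hlim, hs⟩ := hμ'
  by_contra hlt
  push Not at hlt
  obtain ⟨K, hK0, hK⟩ := h.lip
  set c := (μ - μ') / (K + 1) with hc
  have hc0 : 0 < c := div_pos (by linarith) (by linarith)
  have hcK : K * c ≤ μ - μ' := by
    have : (K + 1) * c = μ - μ' := by rw [hc]; field_simp
    linarith
  have hcont := h.cont_b h0
  have key : ∀ t, 0 ≤ t → ((B * t + v t) - (B * 0 + v 0)) ≤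
      (∫ s in (0:ℝ)..t, bf (fun p => G p s ω) μ) - c * t := by
    intro t ht
    have := visc_upper (g := fun s => bf (fun p => G p s ω) μ - c) hs
      ((continuous_const.mul continuous_id).add hv.continuous) (hcont.sub continuous_const)
      (fun p y hp => by
        have e1 := hK p (p + c) y ω
        rw [add_sub_cancel_left, abs_of_pos hc0] at e1
        have := (h.hg y ω).le_bf (p := p + c) (by linarith)
        linarith) ht
    rw [intervalIntegral.integral_sub (hcont.intervalIntegrable _ _)
      (intervalIntegrable_const)] at this
    simp only [intervalIntegral.integral_const, sub_zero, smul_eq_mul, mul_comm t c] at this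
    simpa using this
  have h2 : Tendsto (fun t => (∫ s in (0:ℝ)..t, bf (fun p => G p s ω) μ) / t - c) atTop (𝓝 (B - c)) :=
    h1.sub_const c
  have := le_of_tendsto_of_tendsto (slope_aux B hlim) h2 (by
    filter_upwards [eventually_gt_atTop 0] with t ht
    rw [div_le_iff₀ ht, sub_mul, div_mul_cancel₀ _ ht.ne']
    exact key t ht.le)
  linarith

lemma GoodH.eff_lb_a {G : ℝ → ℝ → Ω → ℝ} {μ R B μ' : ℝ} (h : GoodH G μ R) {ω : Ω}
    (h0 : ∀ y, G 0 y ω < μ)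
    (h1 : Tendsto (fun t => (∫ s in (0:ℝ)..t, af (fun p => G p s ω) μ) / t) atTop (𝓝 B))
    (hμ' : μ' ∈ effSet G ω B) : μ ≤ μ' := by
  obtain ⟨v, hv, hlim, hs⟩ := hμ'
  by_contra hlt
  push Not at hlt
  obtain ⟨K, hK0, hK⟩ := h.lip
  set c := (μ - μ') / (K + 1) with hc
  have hc0 : 0 < c := div_pos (by linarith) (by linarith)
  have hcK : K * c ≤ μ - μ' := by
    have : (K + 1) * c = μ - μ' := by rw [hc]; field_simp
    linarith
  have hcont := h.cont_a h0
  have key : ∀ t, 0 ≤ t → 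
      (∫ s in (0:ℝ)..t, af (fun p => G p s ω) μ) + c * t ≤ ((B * t + v t) - (B * 0 + v 0)) := by
    intro t ht
    have := visc_lower (g := fun s => af (fun p => G p s ω) μ + c) hs
      ((continuous_const.mul continuous_id).add hv.continuous) (hcont.add continuous_const)
      (fun p y hp => by
        have e1 := hK p (p - c) y ω
        rw [sub_sub_cancel_left, abs_neg, abs_of_pos hc0] at e1
        have := (h.hg y ω).af_le (p := p - c) (by linarith)
        linarith) ht
    rw [intervalIntegral.integral_add (hcont.intervalIntegrable _ _)
      (intervalIntegrable_const)] at this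
    simp only [intervalIntegral.integral_const, sub_zero, smul_eq_mul, mul_comm t c] at this
    simpa using this
  have h2 : Tendsto (fun t => (∫ s in (0:ℝ)..t, af (fun p => G p s ω) μ) / t + c) atTop (𝓝 (B + c)) :=
    h1.add_const c
  have := le_of_tendsto_of_tendsto h2 (slope_aux B hlim) (by
    filter_upwards [eventually_gt_atTop 0] with t ht
    rw [le_div_iff₀ ht, add_mul, div_mul_cancel₀ _ ht.ne']
    exact key t ht.le)
  linarith

lemma GoodH.eff_b {G : ℝ → ℝ → Ω → ℝ} {μ R B : ℝ} (h : GoodH G μ R) {ω : Ω}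
    (h0 : ∀ y, G 0 y ω < μ)
    (h1 : Tendsto (fun t => (∫ s in (0:ℝ)..t, bf (fun p => G p s ω) μ) / t) atTop (𝓝 B))
    (h2 : Tendsto (fun t => (∫ s in (0:ℝ)..t, bf (fun p => G p s ω) μ) / t) atBot (𝓝 B)) :
    effectiveHam G ω B = μ :=
  IsLeast.csInf_eq (s := effSet G ω B)
    ⟨eff_mem (h.cont_b h0) (fun y => (h.hg y ω).abs_bf_le)
      (fun y => (h.hg y ω).bf_mem (h0 y).le) h1 h2, fun _ hμ' => h.eff_lb_b h0 h1 hμ'⟩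

lemma GoodH.eff_a {G : ℝ → ℝ → Ω → ℝ} {μ R B : ℝ} (h : GoodH G μ R) {ω : Ω}
    (h0 : ∀ y, G 0 y ω < μ)
    (h1 : Tendsto (fun t => (∫ s in (0:ℝ)..t, af (fun p => G p s ω) μ) / t) atTop (𝓝 B))
    (h2 : Tendsto (fun t => (∫ s in (0:ℝ)..t, af (fun p => G p s ω) μ) / t) atBot (𝓝 B)) :
    effectiveHam G ω B = μ :=
  IsLeast.csInf_eq (s := effSet G ω B)
    ⟨eff_mem (h.cont_a h0) (fun y => (h.hg y ω).abs_af_le)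
      (fun y => (h.hg y ω).af_mem (h0 y).le) h1 h2, fun _ hμ' => h.eff_lb_a h0 h1 hμ'⟩

/-! ### Law of large numbers -/

lemma bf_measurable {α : Type*} [MeasurableSpace α] {g : ℝ → α → ℝ} {μ R : ℝ}
    (hg : ∀ a, HG (fun p => g p a) μ R) (hm : ∀ p, Measurable (g p)) :
    Measurable fun a => bf (fun p => g p a) μ := by
  refine measurable_of_Ici fun d => ?_
  rcases le_or_gt d 0 with hd | hd
  · have : (fun a => bf (fun p => g p a) μ) ⁻¹' Ici d = univ := by
      ext a
      simp only [mem_preimage, mem_Ici, mem_univ, iff_true]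
      exact hd.trans (hg a).bf_nonneg
    rw [this]; exact MeasurableSet.univ
  · have : (fun a => bf (fun p => g p a) μ) ⁻¹' Ici d = {a | g d a ≤ μ} := by
      ext a
      exact (hg a).le_bf_iff hd
    rw [this]
    exact measurableSet_le (hm d) measurable_const

/-- Integral of the process over a unit block. -/
def blk (G : ℝ → ℝ → Ω → ℝ) (μ c : ℝ) (ω : Ω) : ℝ := ∫ s in c..(c + 1), bf (fun p => G p s ω) μ

lemma blk_measurable {m : MeasurableSpace Ω} {G : ℝ → ℝ → Ω → ℝ} {μ R : ℝ} (h : GoodH G μ R)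
    (c : ℝ) (hm : ∀ p, ∀ y ∈ Icc c (c + 1), Measurable (G p y)) : Measurable (blk G μ c) := by
  set π : ℝ → ℝ := fun s => max c (min s (c + 1)) with hπ
  have hπm : ∀ s, π s ∈ Icc c (c + 1) := fun s =>
    ⟨le_max_left _ _, max_le (by linarith) (min_le_right _ _)⟩
  have hπc : Continuous π := by fun_prop
  have h1 : ∀ p, Measurable (Function.uncurry fun s ω => G p (π s) ω) := fun p =>
    measurable_uncurry_of_continuous_of_measurable (fun ω => (h.cy p ω).comp hπc)
      (fun s => hm p _ (hπm s))
  have h2 : Measurable (fun q : ℝ × Ω => bf (fun p => G p (π q.1) q.2) μ) :=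
    bf_measurable (g := fun p (q : ℝ × Ω) => G p (π q.1) q.2) (fun q => h.hg _ _) h1
  have h3 : Measurable (fun q : Ω × ℝ => bf (fun p => G p (π q.2) q.1) μ) :=
    h2.comp measurable_swap
  have h4 := (h3.stronglyMeasurable.integral_prod_right' (ν := volume.restrict (Ioc c (c+1)))).measurable
  convert h4 using 1
  funext ω
  unfold blk
  rw [intervalIntegral.integral_of_le (by linarith)]
  refine setIntegral_congr_fun measurableSet_Ioc fun s hs => ?_
  have : π s = s := by
    simp only [hπ]; rw [min_eq_left hs.2, max_eq_right hs.1.le]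
  simp only [this]

lemma GoodH.intervalIntegrable {G : ℝ → ℝ → Ω → ℝ} {μ R : ℝ} (h : GoodH G μ R) (ω : Ω) (a b : ℝ) :
    IntervalIntegrable (fun s => bf (fun p => G p s ω) μ) volume a b := by
  have hm : Measurable (fun s => bf (fun p => G p s ω) μ) :=
    bf_measurable (g := fun p s => G p s ω) (fun s => h.hg s ω) (fun p => (h.cy p ω).measurable)
  refine (intervalIntegrable_const (c := R)).mono_fun' hm.aestronglyMeasurable ?_
  exact Eventually.of_forall fun s => (h.hg s ω).abs_bf_le

lemma avg_lim {F : ℝ → ℝ} {R E : ℝ} (hF : ∀ s t, |F t - F s| ≤ R * |t - s|) (hF0 : F 0 = 0)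
    (hR : 0 ≤ R)
    (hl : Tendsto (fun n : ℕ => F (2 * n) / n) atTop (𝓝 (E + E))) :
    Tendsto (fun t => F t / t) atTop (𝓝 E) := by
  have h1 : Tendsto (fun t : ℝ => ((⌊(1/2 : ℝ) * t⌋₊ : ℕ) : ℝ) / t) atTop (𝓝 (1/2)) :=
    tendsto_nat_floor_mul_div_atTop (by norm_num)
  have h2 : Tendsto (fun t : ℝ => ⌊(1/2 : ℝ) * t⌋₊) atTop atTop :=
    tendsto_nat_floor_atTop.comp (tendsto_id.const_mul_atTop (by norm_num))
  have h3 := (hl.comp h2).mul h1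
  have h4 : Tendsto (fun t : ℝ => (F t - F (2 * (⌊(1/2 : ℝ) * t⌋₊ : ℕ))) / t) atTop (𝓝 0) := by
    refine squeeze_zero_norm' (a := fun t => (R * 2) / t) ?_ (tendsto_const_nhds.div_atTop tendsto_id)
    filter_upwards [eventually_gt_atTop 0] with t ht
    rw [Real.norm_eq_abs, abs_div, abs_of_pos ht]
    refine div_le_div_of_nonneg_right ((hF _ _).trans (mul_le_mul_of_nonneg_left ?_ hR)) ht.le
    have e1 := Nat.floor_le (by positivity : 0 ≤ (1/2 : ℝ) * t)
    have e2 := Nat.lt_floor_add_one ((1/2 : ℝ) * t)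
    rw [abs_le]; constructor <;> linarith
  have h5 := h3.add h4
  rw [show (E + E) * (1/2) + 0 = E by ring] at h5
  refine h5.congr' ?_
  filter_upwards [eventually_gt_atTop 0] with t ht
  simp only [Function.comp]
  by_cases hn : ((⌊(1/2 : ℝ) * t⌋₊ : ℕ) : ℝ) = 0
  · rw [hn]; simp [hF0]
  · generalize ((⌊(1/2 : ℝ) * t⌋₊ : ℕ) : ℝ) = n at hn ⊢
    field_simp
    ring

lemma slln [MeasurableSpace Ω] (P : Measure Ω) [IsProbabilityMeasure P] (τ : ℝ → Ω → Ω)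
    (pres : ∀ z, MeasurePreserving (τ z) P P) {G : ℝ → ℝ → Ω → ℝ} {μ R : ℝ} (h : GoodH G μ R)
    (hm : ∀ p y, Measurable (G p y)) (stat : Stationary τ G) (dep : UnitRangeDep P G) :
    ∀ᵐ ω ∂P, Tendsto (fun t => (∫ s in (0:ℝ)..t, bf (fun p => G p s ω) μ) / t) atTop
      (𝓝 (∫ ω, blk G μ 0 ω ∂P)) := by
  have hbm : ∀ c, Measurable (blk G μ c) := fun c => blk_measurable h c (fun p y _ => hm p y)
  have hbb : ∀ c ω, |blk G μ c ω| ≤ R := fun c ω => by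
    have := abs_integral_le (g := fun s => bf (fun p => G p s ω) μ)
      (fun s => (h.hg s ω).abs_bf_le) c (c + 1)
    simpa [blk] using this
  have hbi : ∀ c, Integrable (blk G μ c) P := fun c =>
    Integrable.of_bound (hbm c).aestronglyMeasurable R (Eventually.of_forall (hbb c))
  have hshift : ∀ c z, blk G μ (c + z) = blk G μ c ∘ τ z := by
    intro c z
    funext ω
    have := intervalIntegral.integral_comp_add_right (a := c) (b := c + 1)
      (fun s => bf (fun p => G p s ω) μ) z
    simp only [Function.comp, blk]
    rw [show c + z + 1 = c + 1 + z by ring, ← this]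
    simp only [stat _ _ z ω]
  have hid : ∀ c d, IdentDistrib (blk G μ c) (blk G μ d) P P := by
    intro c d
    refine ⟨(hbm c).aemeasurable, (hbm d).aemeasurable, ?_⟩
    have : blk G μ c = blk G μ d ∘ τ (c - d) := by rw [← hshift]; congr 1; ring
    rw [this, ← Measure.map_map (hbm d) (pres _).measurable, (pres _).map_eq]
  have hind : ∀ c d : ℝ, 2 ≤ |c - d| → IndepFun (blk G μ c) (blk G μ d) P := by
    intro c d hcd
    have hle : ∀ c, MeasurableSpace.comap (blk G μ c) inferInstance ≤ genSigma G (Icc c (c+1)) := by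
      intro c
      refine Measurable.comap_le ?_
      refine blk_measurable (m := genSigma G (Icc c (c+1))) h c (fun p y hy => ?_)
      refine Measurable.of_comap_le ?_
      exact le_iSup₂_of_le y hy (le_iSup_of_le p le_rfl)
    have := dep (Icc c (c+1)) (Icc d (d+1)) measurableSet_Icc measurableSet_Icc (by
      intro x hx y hy
      have h1 := hx.1; have h2 := hx.2; have h3 := hy.1; have h4 := hy.2
      rcases le_abs.1 hcd with h5 | h5
      · exact le_abs.2 (Or.inl (by linarith))
      · exact le_abs.2 (Or.inr (by linarith)))
    exact indep_of_indep_of_le_left (indep_of_indep_of_le_right this (hle d)) (hle c)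
  have hlaw : ∀ r : ℝ, ∀ᵐ ω ∂P, Tendsto
      (fun n : ℕ => (∑ i ∈ Finset.range n, blk G μ (2 * (i : ℝ) + r) ω) / n) atTop
      (𝓝 (∫ ω, blk G μ 0 ω ∂P)) := by
    intro r
    have := strong_law_ae_real (μ := P) (fun i : ℕ => blk G μ (2 * (i : ℝ) + r)) (hbi _)
      (by
        intro i j hij
        refine hind _ _ ?_
        rw [show 2 * (i : ℝ) + r - (2 * (j : ℝ) + r) = 2 * (((i : ℤ) - (j : ℤ) : ℤ) : ℝ) by
          push_cast; ring, abs_mul, ← Int.cast_abs]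
        have : 1 ≤ |(i : ℤ) - (j : ℤ)| := Int.one_le_abs (by omega)
        have : (1 : ℝ) ≤ ((|(i : ℤ) - (j : ℤ)| : ℤ) : ℝ) := by exact_mod_cast this
        rw [abs_of_pos (by norm_num : (0:ℝ) < 2)]
        linarith) (fun i => hid _ _)
    rwa [(hid _ 0).integral_eq] at this
  filter_upwards [hlaw 0, hlaw 1] with ω h0 h1
  have hi := fun a b => h.intervalIntegrable ω a b
  refine avg_lim (R := R) (fun s t => ?_) intervalIntegral.integral_same
    ((abs_nonneg _).trans (hbb 0 ω)) ?_
  · rw [intervalIntegral.integral_interval_sub_left (hi _ _) (hi _ _)]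
    exact abs_integral_le (fun s => (h.hg s ω).abs_bf_le) s t
  · refine (h0.add h1).congr fun n => ?_
    rw [← add_div, ← Finset.sum_add_distrib]
    congr 1
    have := intervalIntegral.sum_integral_adjacent_intervals
      (f := fun s => bf (fun p => G p s ω) μ) (μ := volume) (a := fun k : ℕ => 2 * (k : ℝ)) (n := n)
      (fun k _ => hi _ _)
    simp only [Nat.cast_zero, mul_zero] at this
    rw [← this]
    refine Finset.sum_congr rfl fun k _ => ?_
    unfold blk
    rw [add_zero, intervalIntegral.integral_add_adjacent_intervals (hi _ _) (hi _ _)]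
    congr 1
    push_cast; ring

lemma UnitRangeDep.negy [MeasurableSpace Ω] {P : Measure Ω} {G : ℝ → ℝ → Ω → ℝ}
    (dep : UnitRangeDep P G) : UnitRangeDep P (fun p y ω => G p (-y) ω) := by
  intro U V hU hV hUV
  have hle : ∀ U : Set ℝ, genSigma (fun p y ω => G p (-y) ω) U ≤ genSigma G (Neg.neg ⁻¹' U) :=
    fun U => iSup₂_le fun y hy => iSup_le fun p =>
      le_iSup₂_of_le (-y) (by simpa using hy) (le_iSup_of_le p le_rfl)
  have := dep (Neg.neg ⁻¹' U) (Neg.neg ⁻¹' V) (measurable_neg hU) (measurable_neg hV) (by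
    intro x hx y hy
    have := hUV _ hx _ hy
    rwa [show -x - -y = -(x - y) by ring, abs_neg] at this)
  exact indep_of_indep_of_le_left (indep_of_indep_of_le_right this (hle V)) (hle U)

lemma UnitRangeDep.negp [MeasurableSpace Ω] {P : Measure Ω} {G : ℝ → ℝ → Ω → ℝ}
    (dep : UnitRangeDep P G) : UnitRangeDep P (fun p y ω => G (-p) y ω) := by
  intro U V hU hV hUV
  have hle : ∀ U : Set ℝ, genSigma (fun p y ω => G (-p) y ω) U ≤ genSigma G U :=
    fun U => iSup₂_le fun y hy => iSup_le fun p =>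
      le_iSup₂_of_le y hy (le_iSup_of_le (-p) le_rfl)
  have := dep U V hU hV hUV
  exact indep_of_indep_of_le_left (indep_of_indep_of_le_right this (hle V)) (hle U)

lemma slln2 [MeasurableSpace Ω] (P : Measure Ω) [IsProbabilityMeasure P] (τ : ℝ → Ω → Ω)
    (pres : ∀ z, MeasurePreserving (τ z) P P) {G : ℝ → ℝ → Ω → ℝ} {μ R : ℝ} (h : GoodH G μ R)
    (hm : ∀ p y, Measurable (G p y)) (stat : Stationary τ G) (dep : UnitRangeDep P G) :
    ∃ E, ∀ᵐ ω ∂P,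
      Tendsto (fun t => (∫ s in (0:ℝ)..t, bf (fun p => G p s ω) μ) / t) atTop (𝓝 E) ∧
      Tendsto (fun t => (∫ s in (0:ℝ)..t, bf (fun p => G p s ω) μ) / t) atBot (𝓝 E) := by
  refine ⟨∫ ω, blk G μ 0 ω ∂P, ?_⟩
  have h2 := slln P (fun z => τ (-z)) (fun z => pres (-z)) h.negy (fun p y => hm p (-y))
    (fun p y z ω => by
      have := stat p (-y) (-z) ω
      rw [← this]; congr 1; ring) dep.negy
  have hE : ∫ ω, blk (fun p y ω => G p (-y) ω) μ 0 ω ∂P = ∫ ω, blk G μ 0 ω ∂P := by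
    have e1 : blk (fun p y ω => G p (-y) ω) μ 0 = blk G μ 0 ∘ τ (-1) := by
      funext ω
      simp only [blk, Function.comp, zero_add]
      rw [intervalIntegral.integral_comp_neg (fun s => bf (fun p => G p s ω) μ)]
      simp only [fun p y z ω => (stat p y z ω).symm]
      rw [intervalIntegral.integral_comp_add_right (fun s => bf (fun p => G p s ω) μ)]
      norm_num
    rw [e1]
    have hbm : Measurable (blk G μ 0) := blk_measurable h 0 (fun p y _ => hm p y)
    have := integral_map (μ := P) (pres (-1)).measurable.aemeasurable
      (f := blk G μ 0) hbm.aestronglyMeasurable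
    rw [(pres (-1)).map_eq] at this
    exact this.symm
  rw [hE] at h2
  filter_upwards [slln P τ pres h hm stat dep, h2] with ω h3 h4
  refine ⟨h3, ?_⟩
  have h5 := h4.comp tendsto_neg_atBot_atTop
  refine h5.congr fun t => ?_
  simp only [Function.comp]
  rw [intervalIntegral.integral_comp_neg (fun s => bf (fun p => G p s ω) μ), neg_neg, neg_zero,
    intervalIntegral.integral_symm, neg_div_neg_eq]

/-! ### Reflection -/

lemma neg_neg_ham (G : ℝ → ℝ → Ω → ℝ) :
    (fun p y ω => (fun p y ω => G (-p) (-y) ω) (-p) (-y) ω) = G := by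
  funext p y ω; simp

lemma IsLip.refl {v : ℝ → ℝ} (h : IsLip v) : IsLip (fun y => v (-y)) := by
  obtain ⟨K, hK⟩ := h
  refine ⟨K, LipschitzWith.of_dist_le_mul fun x y => ?_⟩
  have := hK.dist_le_mul (-x) (-y)
  rwa [dist_neg_neg] at this

lemma flux_refl (G : ℝ → ℝ → Ω → ℝ) (ω : Ω) :
    fluxLimiter (fun p y ω => G (-p) (-y) ω) ω = fluxLimiter G ω := by
  have key : ∀ G : ℝ → ℝ → Ω → ℝ,
      {μ : ℝ | ∃ v : ℝ → ℝ, IsLip v ∧ IsViscSubsol (fun p y => G p y ω) μ Set.univ v} ⊆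
      {μ : ℝ | ∃ v : ℝ → ℝ, IsLip v ∧ IsViscSubsol (fun p y => G (-p) (-y) ω) μ Set.univ v} := by
    rintro G μ ⟨v, hv, hs⟩
    exact ⟨_, hv.refl, hs.refl⟩
  unfold fluxLimiter
  refine congrArg sInf (Subset.antisymm ?_ (key G))
  have := key (fun p y ω => G (-p) (-y) ω)
  simpa only [neg_neg] using this

lemma metric_refl (G : ℝ → ℝ → Ω → ℝ) (μ : ℝ) (ω : Ω) (y x : ℝ) :
    metricSol (fun p y ω => G (-p) (-y) ω) μ ω y x = metricSol G μ ω (-y) (-x) := by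
  have key : ∀ (G : ℝ → ℝ → Ω → ℝ) (y x : ℝ),
      {r : ℝ | ∃ v : ℝ → ℝ, IsLip v ∧
        IsViscSubsol (fun p y => G p y ω) μ Set.univ v ∧ r = v y - v x} ⊆
      {r : ℝ | ∃ v : ℝ → ℝ, IsLip v ∧
        IsViscSubsol (fun p y => G (-p) (-y) ω) μ Set.univ v ∧ r = v (-y) - v (-x)} := by
    rintro G y x r ⟨v, hv, hs, rfl⟩
    exact ⟨_, hv.refl, hs.refl, by simp⟩
  unfold metricSol
  refine congrArg sSup (Subset.antisymm ?_ ?_)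
  · have := key (fun p y ω => G (-p) (-y) ω) y x
    simpa only [neg_neg] using this
  · have := key G (-y) (-x)
    simpa only [neg_neg] using this

lemma eff_refl (G : ℝ → ℝ → Ω → ℝ) (ω : Ω) (p : ℝ) :
    effectiveHam (fun p y ω => G (-p) (-y) ω) ω p = effectiveHam G ω (-p) := by
  have key : ∀ (G : ℝ → ℝ → Ω → ℝ) (p : ℝ),
      effSet G ω p ⊆ effSet (fun p y ω => G (-p) (-y) ω) ω (-p) := by
    rintro G p μ ⟨v, hv, hl, hs⟩
    refine ⟨_, hv.refl, ?_, ?_⟩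
    · have hneg : Tendsto (fun y : ℝ => -y) (cocompact ℝ) (cocompact ℝ) :=
        (Homeomorph.neg ℝ).isClosedEmbedding.tendsto_cocompact
      have := hl.comp hneg
      simpa [Function.comp_def] using this
    · have := hs.refl
      simpa using this
  change sInf (effSet _ ω p) = sInf (effSet G ω (-p))
  refine congrArg sInf (Subset.antisymm ?_ ?_)
  · have := key (fun p y ω => G (-p) (-y) ω) p
    simpa only [neg_neg] using this
  · have := key G (-p)
    simpa only [neg_neg] using this

/-! ### Core -/

lemma lin_lim {F : ℝ → ℝ} {B : ℝ} (hF0 : F 0 = 0)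
    (h : Tendsto (fun t => F t / t) atTop (𝓝 B)) {y : ℝ} (hy : 0 ≤ y) :
    Tendsto (fun t => F (t * y) / t) atTop (𝓝 (B * y)) := by
  rcases hy.eq_or_lt with h0 | h0
  · subst h0; simp [hF0]
  · have h1 := (h.comp (tendsto_id.atTop_mul_const h0)).mul_const y
    refine h1.congr' ?_
    filter_upwards [eventually_gt_atTop 0] with t ht
    simp only [Function.comp, id]
    field_simp

lemma avg_transfer {f g : ℝ → ℝ} (hf : Continuous f) (hg : Continuous g) {R0 E : ℝ}
    (hfg : ∀ y, R0 ≤ y → f y = g y)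
    (h : Tendsto (fun t => (∫ s in (0:ℝ)..t, f s) / t) atTop (𝓝 E)) :
    Tendsto (fun t => (∫ s in (0:ℝ)..t, g s) / t) atTop (𝓝 E) := by
  have h1 : Tendsto (fun t => (∫ s in (0:ℝ)..t, f s) / t +
      ((∫ s in (0:ℝ)..R0, g s) - ∫ s in (0:ℝ)..R0, f s) / t) atTop (𝓝 (E + 0)) :=
    h.add (tendsto_const_nhds.div_atTop tendsto_id)
  rw [add_zero] at h1
  refine h1.congr' ?_
  filter_upwards [eventually_ge_atTop R0] with t ht
  rw [← add_div]
  congr 1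
  have e1 := intervalIntegral.integral_add_adjacent_intervals (μ := volume)
    (hf.intervalIntegrable 0 R0) (hf.intervalIntegrable R0 t)
  have e2 := intervalIntegral.integral_add_adjacent_intervals (μ := volume)
    (hg.intervalIntegrable 0 R0) (hg.intervalIntegrable R0 t)
  have e3 : ∫ s in R0..t, f s = ∫ s in R0..t, g s := by
    refine intervalIntegral.integral_congr fun s hs => ?_
    rw [uIcc_of_le ht] at hs
    exact hfg s hs.1
  linarith

lemma core [MeasurableSpace Ω] (P : Measure Ω) [IsProbabilityMeasure P] (τ : ℝ → Ω → Ω)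
    (pres : ∀ z, MeasurePreserving (τ z) P P) {HR H : ℝ → ℝ → Ω → ℝ} {μ R R' : ℝ}
    (hHR : GoodH HR μ R) (hH : GoodH H μ R')
    (hm : ∀ p y, Measurable (HR p y)) (stat : Stationary τ HR) (dep : UnitRangeDep P HR)
    (R0 : ℝ) (heq : ∀ p y ω, R0 ≤ y → H p y ω = HR p y ω) {Abar : ℝ} (hμ : Abar < μ)
    (mbar : ℝ → ℝ → ℝ)
    (hconv : ∀ᵐ ω ∂P, fluxLimiter H ω = Abar ∧ ∀ x y : ℝ,
      Tendsto (fun t : ℝ => metricSol H μ ω (t * y) (t * x) / t) atTop (𝓝 (mbar y x)))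
    (Hbar : ℝ → ℝ) (hHbar : ∀ᵐ ω ∂P, ∀ p : ℝ, effectiveHam HR ω p = Hbar p) :
    (∀ x, IsLip (fun y => mbar y x)) ∧ (∀ x, mbar x x = 0) ∧
    ∃ B A, Hbar B = μ ∧ Hbar A = μ ∧ (∀ x y, 0 ≤ x → x ≤ y → mbar y x = B * (y - x)) ∧
      (∀ x y, 0 ≤ y → y ≤ x → mbar y x = A * (y - x)) := by
  have hpos : ∀ᵐ ω ∂P, ∀ y, R0 ≤ y → HR 0 y ω ≤ Abar := by
    filter_upwards [hconv] with ω hω y hy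
    rw [← heq 0 y ω hy]
    exact hH.flux hω.1 y
  have hall : ∀ᵐ ω ∂P, ∀ n : ℕ, ∀ y, R0 ≤ y → HR 0 y (τ (-(n : ℝ)) ω) ≤ Abar :=
    ae_all_iff.2 fun n => (pres _).quasiMeasurePreserving.ae hpos
  obtain ⟨B, hB⟩ := slln2 P τ pres hHR hm stat dep
  obtain ⟨A, hA⟩ := slln2 P τ pres hHR.negp (fun p y => hm (-p) y)
    (fun p y z ω => stat (-p) y z ω) dep.negp
  obtain ⟨ω, ⟨hflux, hlim⟩, hωR, hωB, hωA, hωH⟩ :=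
    (hconv.and (hall.and (hB.and (hA.and hHbar)))).exists
  have hH0 : ∀ y, H 0 y ω < μ := fun y => (hH.flux hflux y).trans_lt hμ
  have hR0 : ∀ y, HR 0 y ω < μ := by
    intro y
    obtain ⟨n, hn⟩ := exists_nat_ge (R0 - y)
    have := hωR n (y + n) (by linarith)
    rw [← stat, add_neg_cancel_right] at this
    exact this.trans_lt hμ
  have hA' : Tendsto (fun t => (∫ s in (0:ℝ)..t, af (fun p => HR p s ω) μ) / t) atTop (𝓝 (-A)) ∧
      Tendsto (fun t => (∫ s in (0:ℝ)..t, af (fun p => HR p s ω) μ) / t) atBot (𝓝 (-A)) := by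
    simp only [af, intervalIntegral.integral_neg, neg_div]
    exact ⟨hωA.1.neg, hωA.2.neg⟩
  have hBH := avg_transfer (R0 := R0) (hHR.cont_b hR0) (hH.cont_b hH0)
    (fun y hy => by simp only [heq _ y ω hy]) hωB.1
  have hAH := avg_transfer (R0 := R0) (hHR.cont_a hR0) (hH.cont_a hH0)
    (fun y hy => by simp only [heq _ y ω hy]) hA'.1
  have hself : ∀ x, metricSol H μ ω x x = 0 := fun x => by
    rw [hH.metric_up hH0 le_rfl]; simp
  refine ⟨fun x => ⟨R'.toNNReal, LipschitzWith.of_dist_le' fun y z => ?_⟩, fun x => ?_, B, -A,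
    ?_, ?_, fun x y hx hxy => ?_, fun x y hy hxy => ?_⟩
  · rw [Real.dist_eq, Real.dist_eq]
    refine le_of_tendsto ((hlim x y).sub (hlim x z)).abs ?_
    filter_upwards [eventually_gt_atTop 0] with t ht
    have := hH.metric_lip hH0 (t * x) (t * y) (t * z)
    rw [← sub_div, abs_div, abs_of_pos ht, div_le_iff₀ ht]
    rw [← mul_sub, abs_mul, abs_of_pos ht] at this
    linarith
  · refine tendsto_nhds_unique (hlim x x) ?_
    simp [hself]
  · rw [← hωH]; exact hHR.eff_b hR0 hωB.1 hωB.2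
  · rw [← hωH]; exact hHR.eff_a hR0 hA'.1 hA'.2
  · refine tendsto_nhds_unique (hlim x y) ?_
    have h1 := (lin_lim intervalIntegral.integral_same hBH (hx.trans hxy)).sub
      (lin_lim intervalIntegral.integral_same hBH hx)
    rw [← mul_sub] at h1
    refine h1.congr' ?_
    filter_upwards [eventually_gt_atTop 0] with t ht
    rw [hH.metric_up hH0 (mul_le_mul_of_nonneg_left hxy ht.le), ← sub_div,
      intervalIntegral.integral_interval_sub_left ((hH.cont_b hH0).intervalIntegrable _ _)
      ((hH.cont_b hH0).intervalIntegrable _ _)]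
  · refine tendsto_nhds_unique (hlim x y) ?_
    have h1 := (lin_lim intervalIntegral.integral_same hAH hy).sub
      (lin_lim intervalIntegral.integral_same hAH (hy.trans hxy))
    rw [← mul_sub] at h1
    refine h1.congr' ?_
    filter_upwards [eventually_gt_atTop 0] with t ht
    rw [hH.metric_down hH0 (mul_le_mul_of_nonneg_left hxy ht.le), ← sub_div,
      intervalIntegral.integral_interval_sub_left ((hH.cont_a hH0).intervalIntegrable _ _)
      ((hH.cont_a hH0).intervalIntegrable _ _)]

lemma visc_of_slopes {Hbar m : ℝ → ℝ} {μ : ℝ} {U : Set ℝ} (hU : IsOpen U)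
    (h : ∀ y ∈ U, ∃ c, Hbar c = μ ∧ HasDerivAt m c y) :
    IsViscSol (fun p _ => Hbar p) μ U m := by
  constructor
  · intro φ hφ y hy hmax
    obtain ⟨c, hc, hd⟩ := h y hy
    have h1 := (hmax.isLocalMax (hU.mem_nhds hy)).hasDerivAt_eq_zero
      (hd.sub ((hφ.differentiable (by simp)) y).hasDerivAt)
    rw [← sub_eq_zero.1 h1]; exact hc.le
  · intro φ hφ y hy hmax
    obtain ⟨c, hc, hd⟩ := h y hy
    have h1 := (hmax.isLocalMin (hU.mem_nhds hy)).hasDerivAt_eq_zero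
      (hd.sub ((hφ.differentiable (by simp)) y).hasDerivAt)
    rw [← sub_eq_zero.1 h1]; exact hc.ge

lemma hasDerivAt_of_eventually_lin {m : ℝ → ℝ} {c x y : ℝ}
    (h : ∀ᶠ z in 𝓝 y, m z = c * (z - x)) : HasDerivAt m c y := by
  have h1 : HasDerivAt (fun z => c * (z - x)) (c * 1) y :=
    ((hasDerivAt_id y).sub_const x).const_mul c
  rw [mul_one] at h1
  exact h1.congr_of_eventuallyEq h

/-- the homogenized metric `m̄_μ(·,x)` is Lipschitz and solves
`H̄_R(D m̄_μ) = μ` on `{y > 0} \ {x}` for `x ≥ 0` (resp. `H̄_L(D m̄_μ) = μ` on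
`{y < 0} \ {x}` for `x ≤ 0`), with `m̄_μ(x,x) = 0`. -/
theorem homogenized_metric_equation [MeasurableSpace Ω]
    (P : Measure Ω) [IsProbabilityMeasure P]
    (τ : ℝ → Ω → Ω) (hτ : ErgodicSetup P τ)
    (HL HR H0 H : ℝ → ℝ → Ω → ℝ)
    (hHL : HamHyp HL) (hHR : HamHyp HR) (hH0 : HamHyp H0) (hH : HamHyp H)
    (hstatL : Stationary τ HL) (hstatR : Stationary τ HR) (hstat0 : Stationary τ H0)
    (hdepL : UnitRangeDep P HL) (hdepR : UnitRangeDep P HR) (hdep0 : UnitRangeDep P H0)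
    (hdecomp :
      (∃ φ : ℝ → ℝ, ContDiff ℝ (⊤ : ℕ∞) φ ∧ Antitone φ ∧
        (∀ y : ℝ, y ≤ -1 → φ y = 1) ∧ (∀ y : ℝ, 1 ≤ y → φ y = 0) ∧
        ∀ (p y : ℝ) (ω : Ω), H p y ω = φ y * HL p y ω + (1 - φ y) * HR p y ω) ∨
      (∃ ε : ℝ, 0 < ε ∧
        (∀ (p y : ℝ) (ω : Ω), HL p y ω ≤ H0 p y ω ∧ HR p y ω ≤ H0 p y ω) ∧
        ∃ ψ : ℝ → ℝ, ContDiff ℝ (⊤ : ℕ∞) ψ ∧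
          (∀ y : ℝ, 2 / Real.sqrt ε < y → ψ y = 1) ∧
          (∀ y : ℝ, y < 1 / Real.sqrt ε → ψ y = 0) ∧
          ∀ (p y : ℝ) (ω : Ω), H p y ω =
            ψ (-y) * HL p y ω + (1 - ψ (-y)) * (1 - ψ y) * H0 p y ω + ψ y * HR p y ω))
    (Abar μ : ℝ) (hμ : Abar < μ)
    (mbar : ℝ → ℝ → ℝ)
    (Ω₀ : Set Ω) (hΩ₀meas : MeasurableSet Ω₀) (hΩ₀full : P Ω₀ = 1)
    (hconv : ∀ ω ∈ Ω₀, fluxLimiter H ω = Abar ∧ ∀ x y : ℝ,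
      Tendsto (fun t : ℝ => metricSol H μ ω (t * y) (t * x) / t) atTop (𝓝 (mbar y x)))
    (HbarL HbarR : ℝ → ℝ)
    (hHbarL : ∀ᵐ ω ∂P, ∀ p : ℝ, effectiveHam HL ω p = HbarL p)
    (hHbarR : ∀ᵐ ω ∂P, ∀ p : ℝ, effectiveHam HR ω p = HbarR p) :
    (∀ x : ℝ, 0 ≤ x → IsLip (fun y => mbar y x) ∧ mbar x x = 0 ∧
      IsViscSol (fun p _ => HbarR p) μ ({y : ℝ | 0 < y} \ {x}) fun y => mbar y x) ∧
    (∀ x : ℝ, x ≤ 0 → IsLip (fun y => mbar y x) ∧ mbar x x = 0 ∧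
      IsViscSol (fun p _ => HbarL p) μ ({y : ℝ | y < 0} \ {x}) fun y => mbar y x) := by
  have hae : ∀ᵐ ω ∂P, ω ∈ Ω₀ := (mem_ae_iff_prob_eq_one hΩ₀meas).2 hΩ₀full
  have hconv' := hae.mono hconv
  obtain ⟨R0, hR0, hR0L⟩ : ∃ R0 : ℝ, (∀ p y ω, R0 ≤ y → H p y ω = HR p y ω) ∧
      (∀ p y ω, R0 ≤ -y → H p y ω = HL p y ω) := by
    rcases hdecomp with ⟨φ, -, -, h1, h2, h3⟩ | ⟨ε, hε, -, ψ, -, h1, h2, h3⟩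
    · refine ⟨1, fun p y ω hy => ?_, fun p y ω hy => ?_⟩
      · rw [h3, h2 y hy]; ring
      · rw [h3, h1 y (by linarith)]; ring
    · have hs : 0 < Real.sqrt ε := Real.sqrt_pos.2 hε
      have e1 : 0 < 1 / Real.sqrt ε := by positivity
      have e2 : 0 < 2 / Real.sqrt ε := by positivity
      refine ⟨2 / Real.sqrt ε + 1, fun p y ω hy => ?_, fun p y ω hy => ?_⟩
      · rw [h3, h1 y (by linarith), h2 (-y) (by linarith)]; ring
      · rw [h3, h1 (-y) (by linarith), h2 y (by linarith)]; ring
  have hmeas : ∀ G : ℝ → ℝ → Ω → ℝ, HamHyp G → ∀ p y, Measurable (G p y) := fun G hG p y =>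
    hG.meas.comp (measurable_const.prodMk (measurable_const.prodMk measurable_id))
  obtain ⟨R, gR⟩ := hHR.good μ
  obtain ⟨R', gH⟩ := hH.good μ
  obtain ⟨R'', gL⟩ := hHL.good μ
  constructor
  · obtain ⟨hlip, hself, B, A, hB, hA, hup, hdown⟩ := core P τ hτ.preserving gR gH (hmeas HR hHR)
      hstatR hdepR R0 hR0 hμ mbar hconv' HbarR hHbarR
    intro x hx
    refine ⟨hlip x, hself x, visc_of_slopes
      ((isOpen_lt continuous_const continuous_id).sdiff isClosed_singleton) ?_⟩
    rintro y ⟨hy0, hyx⟩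
    have hy0 : 0 < y := hy0
    rcases lt_or_gt_of_ne (show y ≠ x from hyx) with h | h
    · refine ⟨A, hA, hasDerivAt_of_eventually_lin (x := x) ?_⟩
      filter_upwards [Ioo_mem_nhds hy0 h] with z hz
      exact hdown x z hz.1.le hz.2.le
    · refine ⟨B, hB, hasDerivAt_of_eventually_lin (x := x) ?_⟩
      filter_upwards [Ioi_mem_nhds h] with z hz
      exact hup x z hx (le_of_lt hz)
  · obtain ⟨hlip, hself, B, A, hB, hA, hup, hdown⟩ := core P (fun z => τ (-z))
      (fun z => hτ.preserving (-z)) (HR := fun p y ω => HL (-p) (-y) ω)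
      (H := fun p y ω => H (-p) (-y) ω) gL.negp.negy gH.negp.negy
      (fun p y => hmeas HL hHL (-p) (-y))
      (fun p y z ω => by
        have := hstatL (-p) (-y) (-z) ω
        show HL (-p) (-(y + z)) ω = HL (-p) (-y) (τ (-z) ω)
        rw [neg_add]; exact this) hdepL.negp.negy R0
      (fun p y ω hy => hR0L (-p) (-y) ω (by simpa using hy)) hμ (fun y x => mbar (-y) (-x))
      (hconv'.mono fun ω hω => ⟨by rw [flux_refl]; exact hω.1, fun x y => by
        have := hω.2 (-x) (-y)
        simpa only [metric_refl, mul_neg] using this⟩)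
      (fun p => HbarL (-p)) (hHbarL.mono fun ω hω p => by rw [eff_refl]; exact hω (-p))
    intro x hx
    have h1 := (hlip (-x)).refl
    have h2 := hself (-x)
    simp only [neg_neg] at h1 h2
    refine ⟨h1, h2, visc_of_slopes
      ((isOpen_lt continuous_id continuous_const).sdiff isClosed_singleton) ?_⟩
    rintro y ⟨hy0, hyx⟩
    have hy0 : y < 0 := hy0
    rcases lt_or_gt_of_ne (show y ≠ x from hyx) with h | h
    · refine ⟨-B, hB, hasDerivAt_of_eventually_lin (x := x) ?_⟩
      filter_upwards [Iio_mem_nhds h] with z hz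
      have := hup (-x) (-z) (by linarith) (neg_le_neg (le_of_lt hz))
      simp only [neg_neg] at this
      rw [this]; ring
    · refine ⟨-A, hA, hasDerivAt_of_eventually_lin (x := x) ?_⟩
      filter_upwards [Ioo_mem_nhds h hy0] with z hz
      have := hdown (-x) (-z) (by linarith [hz.2]) (by linarith [hz.1])
      simp only [neg_neg] at this
      rw [this]; ring
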